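/- Fix γ > 0 and an ordered sample 0 < x_1 < x_2 < ⋯ < x_n of reals. As σ decreases to γ·x_n (equivalently, as the upper endpoint σ/γ decreases to the largest observation x_n), the maximum product of spacings objective for the GPD, M(γ, σ) = −∑_{i=1}^{n+1} log[G(x_i; γ, σ) − G(x_{i−1}; γ, σ)] with G(x_0) ≡ 0 and G(x_{n+1}) ≡ 1, tends to +∞; hence the MPS objective does not collapse at the boundary of the parameter space. -/

import Mathlib

/-- The cdf of the generalized Pareto distribution (GPD):
`G(x) = 1 - (1 - γx/σ) ^ (1/γ)` (real power). -/
noncomputable def gpdCdf (γ σ x : ℝ) : ℝ :=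
  1 - (1 - γ * x / σ) ^ (1 / γ)

/-- Extension of the model cdf `F` evaluated along the ordered sample
`x 1 < x 2 < ⋯ < x n`, using the conventions `F(x₀) ≡ 0` and `F(x_{n+1}) ≡ 1`:
the value at index `0` is `0`, at index `n+1` it is `1`, and at index `i`
(`1 ≤ i ≤ n`) it is `F (x i)`. -/
noncomputable def extCdfSeq (F : ℝ → ℝ) (n : ℕ) (x : ℕ → ℝ) (j : ℕ) : ℝ :=
  if j = 0 then 0 else if j = n + 1 then 1 else F (x j)

/-- The maximum product of spacings (MPS) objective
`M = −∑_{i=1}^{n+1} log Dᵢ` where `Dᵢ = F(xᵢ) − F(x_{i−1})` are the spacings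
of `F` at the ordered sample, with `F(x₀) ≡ 0` and `F(x_{n+1}) ≡ 1`. -/
noncomputable def mpsObjective (F : ℝ → ℝ) (n : ℕ) (x : ℕ → ℝ) : ℝ :=
  - ∑ i ∈ Finset.range (n + 1),
      Real.log (extCdfSeq F n x (i + 1) - extCdfSeq F n x i)

/-!
The spacings of a cdf lie in `[0, 1]`, so every term `-log Dᵢ` of the MPS objective is nonnegative
and the objective dominates each of them. As `σ ↓ γ xₙ`, the last spacing
`1 - G(xₙ) = (1 - γ xₙ / σ) ^ (1 / γ)` decreases to `0`, so its term alone forces divergence.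
-/

open Filter Set Topology

lemma tendsto_one_sub_div_nhdsGT {c : ℝ} (hc : 0 < c) :
    Tendsto (fun s ↦ 1 - c / s) (𝓝[>] c) (𝓝[>] 0) := by
  refine tendsto_nhdsWithin_iff.2 ⟨?_, ?_⟩
  · have hcont : ContinuousAt (fun s ↦ 1 - c / s) c :=
      continuousAt_const.sub (continuousAt_const.div continuousAt_id hc.ne')
    simpa [div_self hc.ne'] using hcont.tendsto.mono_left nhdsWithin_le_nhds
  · filter_upwards [self_mem_nhdsWithin] with s hs
    exact sub_pos.2 ((div_lt_one (hc.trans hs)).2 hs)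

lemma tendsto_rpow_const_nhdsGT_zero {p : ℝ} (hp : 0 < p) :
    Tendsto (fun t : ℝ ↦ t ^ p) (𝓝[>] 0) (𝓝[>] 0) := by
  refine tendsto_nhdsWithin_iff.2 ⟨?_, ?_⟩
  · have hcont := Real.continuousAt_rpow_const 0 p (.inr hp.le)
    simpa [Real.zero_rpow hp.ne'] using hcont.tendsto.mono_left nhdsWithin_le_nhds
  · filter_upwards [self_mem_nhdsWithin] with t ht using Real.rpow_pos_of_pos ht p

section Spacings

variable {F : ℝ → ℝ} {n : ℕ} {x : ℕ → ℝ}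

lemma extCdfSeq_zero : extCdfSeq F n x 0 = 0 :=
  if_pos rfl

lemma extCdfSeq_last : extCdfSeq F n x (n + 1) = 1 := by
  simp [extCdfSeq]

lemma extCdfSeq_of_mem_Icc {j : ℕ} (hj : j ∈ Icc 1 n) : extCdfSeq F n x j = F (x j) := by
  rw [extCdfSeq, if_neg (by grind), if_neg (by grind)]

lemma extCdfSeq_mem_Icc (hF : MapsTo (F ∘ x) (Icc 1 n) (Icc 0 1)) {j : ℕ} (hj : j ≤ n + 1) :
    extCdfSeq F n x j ∈ Icc (0 : ℝ) 1 := by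
  unfold extCdfSeq
  split_ifs with hzero hlast
  · exact left_mem_Icc.2 zero_le_one
  · exact right_mem_Icc.2 zero_le_one
  · exact hF ⟨by lia, by lia⟩

lemma monotoneOn_extCdfSeq (hmono : MonotoneOn (F ∘ x) (Icc 1 n))
    (hF : MapsTo (F ∘ x) (Icc 1 n) (Icc 0 1)) :
    MonotoneOn (extCdfSeq F n x) (Iic (n + 1)) := by
  intro i hi j hj hij
  rcases i.eq_zero_or_pos with rfl | hi_pos
  · exact extCdfSeq_zero.trans_le (extCdfSeq_mem_Icc hF hj).1
  rcases (mem_Iic.1 hj).eq_or_lt with rfl | hj_lt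
  · exact (extCdfSeq_mem_Icc hF hi).2.trans_eq extCdfSeq_last.symm
  have hi_mem : i ∈ Icc 1 n := ⟨hi_pos, by lia⟩
  have hj_mem : j ∈ Icc 1 n := ⟨by lia, by lia⟩
  rw [extCdfSeq_of_mem_Icc hi_mem, extCdfSeq_of_mem_Icc hj_mem]
  exact hmono hi_mem hj_mem hij

lemma spacing_mem_Icc (hmono : MonotoneOn (extCdfSeq F n x) (Iic (n + 1))) {i : ℕ} (hi : i ≤ n) :
    extCdfSeq F n x (i + 1) - extCdfSeq F n x i ∈ Icc (0 : ℝ) 1 := by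
  have hi_mem : i ∈ Iic (n + 1) := by grind
  have hsucc_mem : i + 1 ∈ Iic (n + 1) := by grind
  have hnonneg : 0 ≤ extCdfSeq F n x i :=
    extCdfSeq_zero.symm.trans_le (hmono (by simp) hi_mem (by lia))
  have hle_one : extCdfSeq F n x (i + 1) ≤ 1 :=
    (hmono hsucc_mem self_mem_Iic hsucc_mem).trans_eq extCdfSeq_last
  exact ⟨sub_nonneg.2 (hmono hi_mem hsucc_mem i.le_succ), by linarith⟩

lemma neg_log_spacing_le_mpsObjective (hmono : MonotoneOn (extCdfSeq F n x) (Iic (n + 1)))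
    {i : ℕ} (hi : i ≤ n) :
    -Real.log (extCdfSeq F n x (i + 1) - extCdfSeq F n x i) ≤ mpsObjective F n x := by
  rw [mpsObjective, ← Finset.sum_neg_distrib]
  refine Finset.single_le_sum
    (f := fun k ↦ -Real.log (extCdfSeq F n x (k + 1) - extCdfSeq F n x k))
    (fun k hk ↦ ?_) (Finset.mem_range_succ_iff.2 hi)
  have hspacing := spacing_mem_Icc hmono (Finset.mem_range_succ_iff.1 hk)
  exact neg_nonneg.2 (Real.log_nonpos hspacing.1 hspacing.2)

theorem tendsto_mpsObjective_atTop_of_tendsto_spacing {ι : Type*} {l : Filter ι}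
    {F : ι → ℝ → ℝ} {i : ℕ} (hi : i ≤ n)
    (hmono : ∀ᶠ θ in l, MonotoneOn (extCdfSeq (F θ) n x) (Iic (n + 1)))
    (hspacing : Tendsto (fun θ ↦ extCdfSeq (F θ) n x (i + 1) - extCdfSeq (F θ) n x i) l (𝓝[>] 0)) :
    Tendsto (fun θ ↦ mpsObjective (F θ) n x) l atTop :=
  tendsto_atTop_mono' l (hmono.mono fun _ h ↦ neg_log_spacing_le_mpsObjective h hi)
    (tendsto_neg_atBot_atTop.comp (Real.tendsto_log_nhdsGT_zero.comp hspacing))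

end Spacings

section GeneralizedPareto

variable {γ σ : ℝ}

lemma monotoneOn_gpdCdf (hγ : 0 < γ) (hσ : 0 < σ) : MonotoneOn (gpdCdf γ σ) (Iic (σ / γ)) := by
  intro a _ b hb hab
  have hbase_nonneg : 0 ≤ 1 - γ * b / σ :=
    sub_nonneg.2 ((div_le_one hσ).2 ((le_div_iff₀' hγ).1 hb))
  unfold gpdCdf
  gcongr

lemma gpdCdf_zero : gpdCdf γ σ 0 = 0 := by
  simp [gpdCdf]

lemma gpdCdf_upper_endpoint (hγ : γ ≠ 0) (hσ : σ ≠ 0) : gpdCdf γ σ (σ / γ) = 1 := by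
  simp [gpdCdf, mul_div_cancel₀, hγ, hσ]

lemma mapsTo_gpdCdf (hγ : 0 < γ) (hσ : 0 < σ) :
    MapsTo (gpdCdf γ σ) (Icc 0 (σ / γ)) (Icc 0 1) := by
  have hmono : MonotoneOn (gpdCdf γ σ) (Icc 0 (σ / γ)) :=
    (monotoneOn_gpdCdf hγ hσ).mono Icc_subset_Iic_self
  simpa only [gpdCdf_zero, gpdCdf_upper_endpoint hγ.ne' hσ.ne'] using hmono.mapsTo_Icc

lemma monotoneOn_extCdfSeq_gpdCdf {n : ℕ} {x : ℕ → ℝ} (hγ : 0 < γ) (hσ : 0 < σ)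
    (hx : MonotoneOn x (Icc 1 n)) (hx_mem : MapsTo x (Icc 1 n) (Icc 0 (σ / γ))) :
    MonotoneOn (extCdfSeq (gpdCdf γ σ) n x) (Iic (n + 1)) :=
  monotoneOn_extCdfSeq
    ((monotoneOn_gpdCdf hγ hσ).comp hx (hx_mem.mono_right Icc_subset_Iic_self))
    ((mapsTo_gpdCdf hγ hσ).comp hx_mem)

lemma tendsto_one_sub_gpdCdf_nhdsGT {a : ℝ} (hγ : 0 < γ) (ha : 0 < a) :
    Tendsto (fun σ ↦ 1 - gpdCdf γ σ a) (𝓝[>] (γ * a)) (𝓝[>] 0) := by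
  simpa only [gpdCdf, sub_sub_cancel, Function.comp_def] using
    (tendsto_rpow_const_nhdsGT_zero (one_div_pos.2 hγ)).comp
      (tendsto_one_sub_div_nhdsGT (mul_pos hγ ha))

end GeneralizedPareto

/-- Fix `γ > 0` and an ordered sample `0 < x 1 < x 2 < ⋯ < x n`. As `σ`
decreases to `γ · x n` (equivalently, as the upper endpoint `σ/γ` decreases to
the largest observation `x n`), the MPS objective for the GPD tends to `+∞`;
hence the MPS objective does not collapse at the boundary of the parameter
space. -/
theorem gpd_mps_objective_tendsto_atTop (γ : ℝ) (hγ : 0 < γ)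
    (n : ℕ) (hn : 1 ≤ n) (x : ℕ → ℝ) (hx0 : 0 < x 1)
    (hx : StrictMonoOn x (Set.Icc 1 n)) :
    Filter.Tendsto (fun σ => mpsObjective (gpdCdf γ σ) n x)
      (nhdsWithin (γ * x n) (Set.Ioi (γ * x n))) Filter.atTop := by
  have hn_mem : n ∈ Icc 1 n := right_mem_Icc.2 hn
  have hx_mem : MapsTo x (Icc 1 n) (Icc (x 1) (x n)) := hx.monotoneOn.mapsTo_Icc
  have hxn : 0 < x n := hx0.trans_le (hx_mem hn_mem).1
  refine tendsto_mpsObjective_atTop_of_tendsto_spacing le_rfl ?_ ?_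
  · filter_upwards [self_mem_nhdsWithin] with σ hσ
    have hσ_pos : 0 < σ := (mul_pos hγ hxn).trans hσ
    have hxn_le : x n ≤ σ / γ := (le_div_iff₀' hγ).2 hσ.le
    exact monotoneOn_extCdfSeq_gpdCdf hγ hσ_pos hx.monotoneOn
      (hx_mem.mono_right (Icc_subset_Icc hx0.le hxn_le))
  · simpa only [extCdfSeq_last, extCdfSeq_of_mem_Icc hn_mem] using
      tendsto_one_sub_gpdCdf_nhdsGT hγ hxn
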